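/- Let a ∈ S, x ∈ C̄_a, and let η : Γ → ℤ/2ℤ be a finitely supported configuration. Then ℓ((𝟘,a)(η,x)) − ℓ((η,x)) = −1 if η_a is not identically zero, and = 1 if η_a is identically zero. -/

import Mathlib

open MeasureTheory ProbabilityTheory Filter Topology

namespace LamplighterTree

/-- `Γ`: the free product of `q` copies of `ℤ/2ℤ`. -/
abbrev Gamma (q : ℕ) : Type := Monoid.CoprodI (fun _ : Fin q => Multiplicative (ZMod 2))

/-- The generator `a_i` of `Γ`. -/
def gen (q : ℕ) (i : Fin q) : Gamma q :=
  Monoid.CoprodI.of (i := i) (Multiplicative.ofAdd (1 : ZMod 2))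

/-- Word length `|x|` of `x ∈ Γ` with respect to `S = {a_1, …, a_q}`, i.e. the graph
distance from `x` to the identity `o` in the homogeneous tree `T_q`. -/
noncomputable def wlen {q : ℕ} (x : Gamma q) : ℕ :=
  sInf {n | ∃ w : List (Fin q), w.length = n ∧ (w.map (gen q)).prod = x}

/-- `w` is a prefix of `w'`, i.e. `w` lies on the geodesic from `o` to `w'` in `T_q`. -/
def IsPrefix {q : ℕ} (w w' : Gamma q) : Prop :=
  wlen w + wlen (w⁻¹ * w') = wlen w'

/-- The cone `C_w` rooted at `w`. -/
def cone {q : ℕ} (w : Gamma q) : Set (Gamma q) := {w' | IsPrefix w w'}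

/-- Finitely supported lamp configurations `Γ → ℤ/2ℤ`. -/
abbrev Config (q : ℕ) : Type := Gamma q →₀ ZMod 2

/-- The lamplighter group `L_q` as the set of pairs (configuration, position). -/
abbrev L (q : ℕ) : Type := Config q × Gamma q

/-- The translated configuration `xη`, `(xη)(w) = η(x⁻¹ w)`. -/
noncomputable def translate {q : ℕ} (x : Gamma q) (η : Config q) : Config q :=
  Finsupp.mapDomain (fun w => x * w) η

/-- The wreath-product multiplication `(η₁,x)(η₂,y) = (η₁ ⊕ xη₂, xy)`. -/
noncomputable def lmul {q : ℕ} (z₁ z₂ : L q) : L q :=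
  (z₁.1 + translate z₁.2 z₂.1, z₁.2 * z₂.2)

/-- The identity `(𝟘, o)` of `L_q`. -/
def lone (q : ℕ) : L q := (0, 1)

/-- The generator `(𝟙_o, o)` of `L_q`. -/
noncomputable def lampSwitch (q : ℕ) : L q := (Finsupp.single 1 1, 1)

/-- The generator `(𝟘, a_i)` of `L_q`. -/
def move (q : ℕ) (i : Fin q) : L q := (0, gen q i)

/-- The generating set `S_{L_q}`. -/
noncomputable def lampGen (q : ℕ) : Set (L q) := {lampSwitch q} ∪ {z | ∃ i, z = move q i}

/-- Word length `ℓ(z)` of `z ∈ L_q` with respect to `S_{L_q}`. -/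
noncomputable def llen {q : ℕ} (z : L q) : ℕ :=
  sInf {n | ∃ w : List (L q), w.length = n ∧ (∀ g ∈ w, g ∈ lampGen q) ∧
    w.foldr lmul (lone q) = z}

instance {q : ℕ} : MeasurableSpace (Gamma q) := ⊤
instance {q : ℕ} : MeasurableSpace (Config q) := ⊤

/-- The lamplighter random walk `Z_n` built from the increments `i_k = inc k`, `k ≥ 1`. -/
noncomputable def Z {q : ℕ} {Ω : Type*} (inc : ℕ → Ω → L q) : ℕ → Ω → L q
  | 0 => fun _ => lone q
  | n + 1 => fun ω => lmul (Z inc n ω) (inc (n + 1) ω)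

end LamplighterTree

namespace LamplighterTree

section Tree

variable {q : ℕ}

theorem gen_mul_self (i : Fin q) : gen q i * gen q i = 1 := by
  unfold gen
  rw [← map_mul, ← ofAdd_add]
  have : (1 + 1 : ZMod 2) = 0 := by decide
  rw [this]; simp

theorem gen_inv (i : Fin q) : (gen q i)⁻¹ = gen q i :=
  inv_eq_of_mul_eq_one_left (gen_mul_self i)

/-- product of a list of generators -/
noncomputable def pr (l : List (Fin q)) : Gamma q := (l.map (gen q)).prod

@[simp] theorem pr_nil : pr ([] : List (Fin q)) = 1 := by simp [pr]
@[simp] theorem pr_cons (i : Fin q) (l) : pr (i :: l) = gen q i * pr l := by simp [pr]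
@[simp] theorem pr_append (l l' : List (Fin q)) : pr (l ++ l') = pr l * pr l' := by simp [pr]

/-- reduced lists -/
def Red (l : List (Fin q)) : Prop := l.IsChain (· ≠ ·)

/-- the reduced word attached to a reduced list -/
def toW (l : List (Fin q)) (h : Red l) :
    Monoid.CoprodI.Word (fun _ : Fin q => Multiplicative (ZMod 2)) where
  toList := l.map (fun i => ⟨i, Multiplicative.ofAdd (1 : ZMod 2)⟩)
  ne_one := by
    intro p hp
    obtain ⟨i, _, rfl⟩ := List.mem_map.1 hp
    change Multiplicative.ofAdd (1 : ZMod 2) ≠ 1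
    decide
  chain_ne := by
    rw [List.isChain_map]
    exact h

theorem toW_prod (l : List (Fin q)) (h : Red l) : (toW l h).prod = pr l := by
  simp [Monoid.CoprodI.Word.prod, toW, pr, Function.comp_def]
  rfl

theorem pr_inj {l l' : List (Fin q)} (h : Red l) (h' : Red l') (e : pr l = pr l') : l = l' := by
  rw [← toW_prod l h, ← toW_prod l' h'] at e
  have e2 : toW l h = toW l' h' :=
    Monoid.CoprodI.Word.equiv.symm.injective e
  have e3 := congrArg (fun w => w.toList.map Sigma.fst) e2
  simpa [toW, Function.comp_def] using e3

theorem exists_red (w : List (Fin q)) : ∃ l, Red l ∧ pr l = pr w ∧ l.length ≤ w.length := by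
  induction w with
  | nil => exact ⟨[], by simp [Red], rfl, le_rfl⟩
  | cons j w ih =>
    obtain ⟨l, hl, e, hle⟩ := ih
    match l, hl with
    | [], _ => exact ⟨[j], by simp [Red], by simp at e ⊢; rw [← e], by simp⟩
    | k :: t, hl =>
      by_cases hjk : j = k
      · subst hjk
        refine ⟨t, List.IsChain.tail hl, ?_, ?_⟩
        · rw [pr_cons, ← e, pr_cons, ← mul_assoc, gen_mul_self, one_mul]
        · simp at hle ⊢; omega
      · refine ⟨j :: k :: t, ?_, ?_, ?_⟩
        · unfold Red at hl ⊢
          rw [List.isChain_cons_cons]; exact ⟨hjk, hl⟩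
        · rw [pr_cons, e, pr_cons]
        · simp at hle ⊢; omega

theorem exists_pr (x : Gamma q) : ∃ w : List (Fin q), pr w = x := by
  induction x using Monoid.CoprodI.induction_on with
  | one => exact ⟨[], by simp⟩
  | of i m =>
    by_cases hm : m = 1
    · exact ⟨[], by simp [hm]⟩
    · refine ⟨[i], ?_⟩
      have : m = Multiplicative.ofAdd (1 : ZMod 2) := by
        revert m; decide
      simp [gen, this]
  | mul x y hx hy =>
    obtain ⟨u, rfl⟩ := hx
    obtain ⟨v, rfl⟩ := hy
    exact ⟨u ++ v, by simp⟩

theorem exists_nf (x : Gamma q) : ∃ l, Red l ∧ pr l = x := by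
  obtain ⟨w, rfl⟩ := exists_pr x
  obtain ⟨l, h, e, _⟩ := exists_red w
  exact ⟨l, h, e⟩

theorem wlen_pr {l : List (Fin q)} (h : Red l) : wlen (pr l) = l.length := by
  unfold wlen
  apply le_antisymm
  · exact Nat.sInf_le (Exists.intro l ⟨rfl, rfl⟩)
  · apply le_csInf (Exists.intro l.length (Exists.intro l ⟨rfl, rfl⟩))
    rintro n ⟨w, rfl, e⟩
    obtain ⟨l', h', e', hle⟩ := exists_red w
    have : l' = l := pr_inj h' h (e'.trans e)
    rw [← this]; exact hle

theorem mem_cone_iff {l : List (Fin q)} (h : Red l) (i : Fin q) :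
    pr l ∈ cone (gen q i) ↔ l.head? = some i := by
  change wlen (gen q i) + wlen ((gen q i)⁻¹ * pr l) = wlen (pr l) ↔ _
  have h1 : wlen (gen q i) = 1 := by
    have := wlen_pr (l := [i]) (by simp [Red])
    simpa using this
  rw [h1, gen_inv, wlen_pr h]
  match l, h with
  | [], _ => simp
  | k :: t, h =>
    by_cases hik : i = k
    · subst hik
      have ht : Red t := List.IsChain.tail h
      rw [pr_cons, ← mul_assoc, gen_mul_self, one_mul, wlen_pr ht]
      simp; omega
    · have ht : Red (i :: k :: t) := by
        unfold Red at h ⊢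
        rw [List.isChain_cons_cons]; exact ⟨hik, h⟩
      rw [← pr_cons, wlen_pr ht]
      simp [Ne.symm hik]; omega

theorem one_not_mem (i : Fin q) : (1 : Gamma q) ∉ cone (gen q i) := by
  have := mem_cone_iff (l := []) (by simp [Red]) i
  simpa using this

theorem gen_mem (i : Fin q) : gen q i ∈ cone (gen q i) := by
  have := mem_cone_iff (l := [i]) (by simp [Red]) i
  simpa using this

theorem cross_out {i j : Fin q} {x : Gamma q} (hx : x ∈ cone (gen q i))
    (hxj : x * gen q j ∉ cone (gen q i)) : x = gen q i ∧ x * gen q j = 1 := by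
  obtain ⟨l, h, rfl⟩ := exists_nf x
  rw [mem_cone_iff h] at hx
  rcases List.eq_nil_or_concat l with rfl | ⟨t, k, rfl⟩
  · simp at hx
  by_cases hjk : k = j
  · subst hjk
    have ht : Red t := by
      unfold Red at h ⊢
      exact (List.isChain_append.1 (by simpa using h)).1
    have e : pr (t.concat k) * gen q k = pr t := by
      simp [mul_assoc, gen_mul_self]
    rw [e, mem_cone_iff ht] at hxj
    match t with
    | [] =>
      simp at hx
      subst hx
      simp [gen_mul_self]
    | b :: t => simp at hx hxj; exact absurd hx hxj
  · exfalso
    have ht : Red (t.concat k ++ [j]) := by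
      unfold Red at h ⊢
      rw [List.isChain_append]
      refine ⟨h, by simp, ?_⟩
      simpa using hjk
    have e : pr (t.concat k) * gen q j = pr (t.concat k ++ [j]) := by simp [mul_assoc]
    rw [e, mem_cone_iff ht] at hxj
    apply hxj
    rw [List.head?_append, hx]; rfl

theorem cross_in {i j : Fin q} {x : Gamma q} (hx : x ∉ cone (gen q i))
    (hxj : x * gen q j ∈ cone (gen q i)) : x = 1 ∧ x * gen q j = gen q i := by
  have e : x * gen q j * gen q j = x := by rw [mul_assoc, gen_mul_self, mul_one]
  have := cross_out (j := j) hxj (by rwa [e])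
  rw [e] at this
  exact ⟨this.2, this.1⟩

end Tree

section Walks

variable {q : ℕ}

/-- Lamplighter walks starting at `s` with zero configuration. -/
inductive Wk (s : Gamma q) : ℕ → Config q → Gamma q → Prop
  | nil : Wk s 0 0 s
  | sw {n η x} : Wk s n η x → Wk s (n + 1) (η + Finsupp.single x 1) x
  | mv {n η x} (j : Fin q) : Wk s n η x → Wk s (n + 1) η (x * gen q j)

theorem Wk.cat {s y x : Gamma q} {n m : ℕ} {α β : Config q} (h : Wk s n α y) (h' : Wk y m β x) :
    Wk s (n + m) (α + β) x := by
  induction h' with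
  | nil => simpa using h
  | sw _ ih => rw [← add_assoc, ← add_assoc]; exact ih.sw
  | mv j _ ih => exact ih.mv j

theorem translate_add (g : Gamma q) (α β : Config q) :
    translate g (α + β) = translate g α + translate g β := Finsupp.mapDomain_add

theorem translate_translate (g h : Gamma q) (α : Config q) :
    translate g (translate h α) = translate (g * h) α := by
  unfold translate
  rw [← Finsupp.mapDomain_comp]
  congr 1
  funext w
  simp [mul_assoc]

theorem translate_zero (g : Gamma q) : translate g (0 : Config q) = 0 := Finsupp.mapDomain_zero

theorem translate_one (α : Config q) : translate 1 α = α := by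
  unfold translate
  simp only [one_mul]
  exact Finsupp.mapDomain_id

theorem translate_single (g w : Gamma q) (c : ZMod 2) :
    translate g (Finsupp.single w c) = Finsupp.single (g * w) c := Finsupp.mapDomain_single

theorem Wk.trans {s x : Gamma q} {n : ℕ} {η : Config q} (g : Gamma q) (h : Wk s n η x) :
    Wk (g * s) n (translate g η) (g * x) := by
  induction h with
  | nil => rw [translate_zero]; exact .nil
  | sw _ ih => rw [translate_add, translate_single]; exact ih.sw
  | mv j _ ih => rw [← mul_assoc]; exact ih.mv j

theorem lmul_assoc (a b c : L q) : lmul (lmul a b) c = lmul a (lmul b c) := by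
  simp [lmul, translate_add, translate_translate, mul_assoc, add_assoc]

theorem lone_lmul (a : L q) : lmul (lone q) a = a := by
  simp [lmul, lone, translate_one]

theorem lmul_lone (a : L q) : lmul a (lone q) = a := by
  simp [lmul, lone, translate_zero]

theorem foldr_lmul (w : List (L q)) (b : L q) :
    w.foldr lmul b = lmul (w.foldr lmul (lone q)) b := by
  induction w with
  | nil => simp [lone_lmul]
  | cons g w ih => simp only [List.foldr_cons]; rw [ih, lmul_assoc]

theorem wk_of_list (w : List (L q)) (h : ∀ g ∈ w, g ∈ lampGen q) :
    Wk 1 w.length (w.foldr lmul (lone q)).1 (w.foldr lmul (lone q)).2 := by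
  induction w with
  | nil => exact .nil
  | cons g w ih =>
    have ih := ih (fun g hg => h g (List.mem_cons_of_mem _ hg))
    have hg := h g List.mem_cons_self
    simp only [List.foldr_cons, List.length_cons]
    generalize w.foldr lmul (lone q) = z at *
    rw [add_comm]
    rcases hg with hg | ⟨i, hg⟩
    · rw [Set.mem_singleton_iff] at hg
      subst hg
      have h1 : Wk (1 : Gamma q) 1 (Finsupp.single 1 1) 1 := by
        simpa using (Wk.nil (s := (1 : Gamma q))).sw
      simpa [lmul, lampSwitch, translate_one] using h1.cat ih
    · subst hg
      have h1 : Wk (1 : Gamma q) 1 0 (gen q i) := by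
        simpa using (Wk.nil (s := (1 : Gamma q))).mv i
      have h2 := ih.trans (gen q i)
      rw [mul_one] at h2
      simpa [lmul, move] using h1.cat h2

theorem list_of_wk {n : ℕ} {η : Config q} {x : Gamma q} (h : Wk 1 n η x) :
    ∃ w : List (L q), w.length = n ∧ (∀ g ∈ w, g ∈ lampGen q) ∧
      w.foldr lmul (lone q) = (η, x) := by
  induction h with
  | nil => exact ⟨[], rfl, by simp, rfl⟩
  | sw _ ih =>
    obtain ⟨w, rfl, hw, e⟩ := ih
    refine ⟨w ++ [lampSwitch q], by simp, ?_, ?_⟩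
    · intro g hg
      rcases List.mem_append.1 hg with hg | hg
      · exact hw g hg
      · left; simpa using hg
    · rw [List.foldr_append, foldr_lmul, e]
      simp [lmul_lone]
      simp [lmul, lampSwitch, translate_single]
  | mv j _ ih =>
    obtain ⟨w, rfl, hw, e⟩ := ih
    refine ⟨w ++ [move q j], by simp, ?_, ?_⟩
    · intro g hg
      rcases List.mem_append.1 hg with hg | hg
      · exact hw g hg
      · right; exact ⟨j, by simpa using hg⟩
    · rw [List.foldr_append, foldr_lmul, e]
      simp [lmul_lone]
      simp [lmul, move, translate_zero]

theorem llen_le {n : ℕ} {η : Config q} {x : Gamma q} (h : Wk 1 n η x) :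
    llen ((η, x) : L q) ≤ n := Nat.sInf_le (list_of_wk h)

theorem wk_pr (s : Gamma q) (l : List (Fin q)) : ∃ n, Wk s n 0 (s * pr l) := by
  induction l generalizing s with
  | nil => exact ⟨0, by simpa using Wk.nil⟩
  | cons j l ih =>
    obtain ⟨n, h⟩ := ih (s * gen q j)
    refine ⟨0 + 1 + n, ?_⟩
    have := (Wk.nil.mv j).cat h
    simpa [mul_assoc] using this

theorem wk_conn (s x : Gamma q) : ∃ n, Wk s n 0 x := by
  obtain ⟨l, hl⟩ := exists_pr (s⁻¹ * x)
  obtain ⟨n, h⟩ := wk_pr s l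
  exact ⟨n, by simpa [hl] using h⟩

theorem wk_exists (η : Config q) (s x : Gamma q) : ∃ n, Wk s n η x := by
  induction η using Finsupp.induction_linear generalizing s x with
  | zero => exact wk_conn s x
  | add α β ha hb =>
    obtain ⟨n, h⟩ := ha s x
    obtain ⟨m, h'⟩ := hb x x
    exact ⟨_, h.cat h'⟩
  | single w c =>
    by_cases hc : c = 0
    · subst hc
      simpa using wk_conn s x
    · have : c = 1 := by revert c; decide
      subst this
      obtain ⟨n, h⟩ := wk_conn s w
      obtain ⟨m, h'⟩ := wk_conn w x
      exact ⟨_, by simpa using h.sw.cat h'⟩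

theorem wk_llen (η : Config q) (x : Gamma q) : Wk 1 (llen ((η, x) : L q)) η x := by
  obtain ⟨n, h⟩ := wk_exists η 1 x
  obtain ⟨w, hl, hw, e⟩ := Nat.sInf_mem (s := {n | ∃ w : List (L q), w.length = n ∧
    (∀ g ∈ w, g ∈ lampGen q) ∧ w.foldr lmul (lone q) = (η, x)}) ⟨n, list_of_wk h⟩
  have := wk_of_list w hw
  rw [e, hl] at this
  exact this

open Classical in
theorem wk_split (i : Fin q) {k : ℕ} {η : Config q} {x : Gamma q} (h : Wk 1 k η x) :
    (x ∈ cone (gen q i) → ∃ m n, Wk (gen q i) m (η.filter (· ∈ cone (gen q i))) x ∧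
      Wk 1 n (η.filter (· ∉ cone (gen q i))) 1 ∧ m + n + 1 ≤ k) ∧
    (x ∉ cone (gen q i) → ∃ m n, Wk (gen q i) m (η.filter (· ∈ cone (gen q i))) (gen q i) ∧
      Wk 1 n (η.filter (· ∉ cone (gen q i))) x ∧
      (m + n ≤ k ∧ (η.filter (· ∈ cone (gen q i)) ≠ 0 → m + n + 2 ≤ k))) := by
  induction h with
  | nil =>
    refine ⟨fun h => absurd h (one_not_mem i), fun _ => ⟨0, 0, ?_, ?_, ?_⟩⟩
    · rw [Finsupp.filter_zero]; exact .nil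
    · rw [Finsupp.filter_zero]; exact .nil
    · exact ⟨le_rfl, fun h => absurd (Finsupp.filter_zero _) h⟩
  | @sw k η x _ ih =>
    constructor
    · intro hx
      obtain ⟨m, n, h1, h2, h3⟩ := ih.1 hx
      refine ⟨m + 1, n, ?_, ?_, by omega⟩
      · rw [Finsupp.filter_add, Finsupp.filter_single_of_pos _ hx]; exact h1.sw
      · rw [Finsupp.filter_add, Finsupp.filter_single_of_neg (· ∉ cone (gen q i)) (not_not.2 hx), add_zero]; exact h2
    · intro hx
      obtain ⟨m, n, h1, h2, h3, h4⟩ := ih.2 hx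
      rw [Finsupp.filter_add, Finsupp.filter_single_of_neg _ hx, add_zero, Finsupp.filter_add,
        Finsupp.filter_single_of_pos (· ∉ cone (gen q i)) hx]
      exact ⟨m, n + 1, h1, h2.sw, by omega, fun h => by have := h4 h; omega⟩
  | @mv k η x j _ ih =>
    by_cases hx : x ∈ cone (gen q i)
    · obtain ⟨m, n, h1, h2, h3⟩ := ih.1 hx
      refine ⟨fun _ => ⟨m + 1, n, h1.mv j, h2, by omega⟩, fun hxj => ?_⟩
      obtain ⟨e1, e2⟩ := cross_out hx hxj
      rw [e2]
      rw [e1] at h1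
      exact ⟨m, n, h1, h2, by omega, fun _ => by omega⟩
    · obtain ⟨m, n, h1, h2, h3, h4⟩ := ih.2 hx
      refine ⟨fun hxj => ?_, fun _ => ⟨m, n + 1, h1, h2.mv j, by omega, fun h => by
        have := h4 h; omega⟩⟩
      obtain ⟨e1, e2⟩ := cross_in hx hxj
      rw [e2]
      rw [e1] at h2
      exact ⟨m, n, h1, h2, by omega⟩

open Classical in
theorem wk_retract (i : Fin q) {k : ℕ} {η : Config q} {x : Gamma q} (h : Wk (gen q i) k η x) :
    (x ∈ cone (gen q i) → ∃ n, Wk 1 n (η.filter (· ∉ cone (gen q i))) 1 ∧ n ≤ k) ∧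
    (x ∉ cone (gen q i) → ∃ n, Wk 1 n (η.filter (· ∉ cone (gen q i))) x ∧ n + 1 ≤ k) := by
  induction h with
  | nil =>
    refine ⟨fun _ => ⟨0, ?_, le_rfl⟩, fun h => absurd (gen_mem i) h⟩
    rw [Finsupp.filter_zero]; exact .nil
  | @sw k η x _ ih =>
    constructor
    · intro hx
      obtain ⟨n, h1, h2⟩ := ih.1 hx
      refine ⟨n, ?_, by omega⟩
      rw [Finsupp.filter_add, Finsupp.filter_single_of_neg (· ∉ cone (gen q i)) (not_not.2 hx), add_zero]; exact h1
    · intro hx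
      obtain ⟨n, h1, h2⟩ := ih.2 hx
      refine ⟨n + 1, ?_, by omega⟩
      rw [Finsupp.filter_add,
        Finsupp.filter_single_of_pos (· ∉ cone (gen q i)) hx]
      exact h1.sw
  | @mv k η x j _ ih =>
    by_cases hx : x ∈ cone (gen q i)
    · obtain ⟨n, h1, h2⟩ := ih.1 hx
      refine ⟨fun _ => ⟨n, h1, by omega⟩, fun hxj => ?_⟩
      obtain ⟨e1, e2⟩ := cross_out hx hxj
      rw [e2]
      exact ⟨n, h1, by omega⟩
    · obtain ⟨n, h1, h2⟩ := ih.2 hx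
      refine ⟨fun hxj => ?_, fun _ => ⟨n + 1, h1.mv j, by omega⟩⟩
      obtain ⟨e1, e2⟩ := cross_in hx hxj
      rw [e1] at h1
      exact ⟨n, h1, by omega⟩

theorem lmul_move (i : Fin q) (η : Config q) (x : Gamma q) :
    lmul (move q i) (η, x) = (translate (gen q i) η, gen q i * x) := by
  simp [lmul, move]

theorem wk_gen_llen (i : Fin q) (η : Config q) (x : Gamma q) :
    Wk (gen q i) (llen (lmul (move q i) (η, x))) η x := by
  rw [lmul_move]
  have h := (wk_llen (translate (gen q i) η) (gen q i * x)).trans (gen q i)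
  rwa [translate_translate, ← mul_assoc, gen_mul_self, translate_one, one_mul, mul_one] at h

theorem llen_move_le {i : Fin q} {n : ℕ} {η : Config q} {x : Gamma q} (h : Wk (gen q i) n η x) :
    llen (lmul (move q i) (η, x)) ≤ n := by
  rw [lmul_move]
  have h := h.trans (gen q i)
  rw [gen_mul_self] at h
  exact llen_le h

theorem wk_step (s : Gamma q) (i : Fin q) : Wk s 1 0 (s * gen q i) := by
  simpa using (Wk.nil (s := s)).mv i

end Walks

/-- for `a ∈ S`, `x ∈ C̄_a` and a finitely supported configuration `η`,
`ℓ((𝟘,a)(η,x)) − ℓ((η,x)) = −1` if `η_a ≢ 𝟘` and `= 1` if `η_a ≡ 𝟘`. -/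
theorem llen_diff_move_of_not_mem_cone {q : ℕ} (hq : 3 ≤ q) (i : Fin q)
    (η : Config q) (x : Gamma q) (hx : x ∉ cone (gen q i)) :
    ((∃ w ∈ cone (gen q i), η w ≠ 0) →
      (llen (lmul (move q i) (η, x)) : ℤ) - (llen ((η, x) : L q) : ℤ) = -1) ∧
    ((∀ w ∈ cone (gen q i), η w = 0) →
      (llen (lmul (move q i) (η, x)) : ℤ) - (llen ((η, x) : L q) : ℤ) = 1) := by
  classical
  have hs : Wk (gen q i) 1 0 1 := by
    have := wk_step (gen q i) i
    rwa [gen_mul_self] at this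
  have hs' : Wk 1 1 0 (gen q i) := by
    have := wk_step 1 i
    rwa [one_mul] at this
  have u1 := llen_move_le (hs.cat (wk_llen η x))
  have u2 := llen_le (hs'.cat (wk_gen_llen i η x))
  rw [zero_add] at u1 u2
  constructor
  · rintro ⟨w, hw, hne⟩
    obtain ⟨m, n, h1, h2, h3, h4⟩ := (wk_split i (wk_llen η x)).2 hx
    have h5 := h4 (fun h => hne (by
      have := DFunLike.congr_fun h w
      rwa [Finsupp.filter_apply_pos (p := (· ∈ cone (gen q i))) _ hw] at this))
    have h6 := (h1.cat hs).cat h2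
    rw [add_zero, Finsupp.filter_add_filter_not] at h6
    have := llen_move_le h6
    omega
  · intro h0
    obtain ⟨n, h1, h2⟩ := (wk_retract i (wk_gen_llen i η x)).2 hx
    have e : η.filter (· ∉ cone (gen q i)) = η := by
      rw [Finsupp.filter_eq_self_iff]
      intro w hw hc
      exact hw (h0 w hc)
    rw [e] at h1
    have := llen_le h1
    omega

end LamplighterTree
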